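/- Let F be a finite field with q elements, let n ≥ 2 and 2 ≤ i ≤ n, let l_i ≥ l_{i+1} ≥ ⋯ ≥ l_n ≥ 1 be integers, let l_1 ≥ 1, and let l_2, …, l_{i-1} be natural numbers. Then #R^i_{n;l_1,l_2,…,l_n} = q^{n-1} · #R^i_{n;l_1−1,l_2,…,l_n}. -/

import Mathlib

open Polynomial Matrix

/-- `P_{n;l₁,…,lₙ}`: the set of `A ∈ GL_n(F[x])` with `deg a_{i,j} ≤ l_j` for all `i, j` and
constant-term matrix equal to the identity. -/
def Pset (F : Type*) [Field F] (n : ℕ) (l : Fin n → ℕ) : Set (GL (Fin n) F[X]) :=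
  {A | (∀ i j, ((A : Matrix (Fin n) (Fin n) F[X]) i j).degree ≤ (l j : ℕ)) ∧
       (A : Matrix (Fin n) (Fin n) F[X]).map (fun p => p.coeff 0) = 1}

/-- `v_j(A) ∈ Fⁿ`: the vector of coefficients of `x^{l_j}` in the `j`-th column of `A`. -/
def colVec (F : Type*) [Field F] (n : ℕ) (l : Fin n → ℕ) (A : GL (Fin n) F[X])
    (j : Fin n) : Fin n → F :=
  fun r => ((A : Matrix (Fin n) (Fin n) F[X]) r j).coeff (l j)

/-- `R^i_{n;l₁,…,lₙ}`: those `A ∈ P_{n;l₁,…,lₙ}` such that the vectors `v_i(A),…,vₙ(A)`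
(columns with 1-based index `≥ i`) are linearly dependent over `F`. -/
def Rset (F : Type*) [Field F] (n : ℕ) (l : Fin n → ℕ) (i : ℕ) : Set (GL (Fin n) F[X]) :=
  {A ∈ Pset F n l |
    ¬ LinearIndependent F (fun j : {j : Fin n // i ≤ (j : ℕ) + 1} => colVec F n l A j)}

/-!
Let `v_j`, `j ∈ s`, be independent, and let `k ∉ s` have `l_j ≤ l_k` on `s`. If `v_k` is a
combination of the `v_j`, then a column shear, followed by a constant left factor restoring the
constant term, makes it any other prescribed combination, in particular `0`, which means that the
degree bound `l_k` drops by one. With `N(l, s)` the number of matrices of `P_{n;l}` with independent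
`v_j`, `j ∈ s`, this gives `N(l, s) = N(l, s ∪ {k}) + q^|s| N(l - e_k, s)`.

For `p ∉ s` the identity to prove is `N(l, s) = q^(n-1) N(l - e_p, s)`. Once it holds after lowering
any `l_k`, `k ≠ p`, the recursion shows that for `l` it holds for all such `s` or for none, so by
induction on `l` one `s` suffices. If `l_p` is the largest bound, take `s = {p}ᶜ`: the determinant
of `A` is constant, so the `v_j` cannot all be independent. Lowering the largest bound repeatedly
computes `|P_{n;l}| = q^((n-1) ∑ l_j)`, which is the case `s = ∅` for every `p`, and hence every
case.
-/

section DegreeBounds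

variable {ι : Type*} [DecidableEq ι] {l : ι → ℕ} {k : ι}

lemma sub_single_lt (hk : 1 ≤ l k) : l - Pi.single k 1 < l := by
  refine Pi.lt_def.2 ⟨fun j => Nat.sub_le _ _, k, ?_⟩
  simpa using Nat.sub_lt hk one_pos

lemma sum_sub_single_add_one [Fintype ι] (hk : 1 ≤ l k) :
    ∑ j, (l - Pi.single k 1 : ι → ℕ) j + 1 = ∑ j, l j := by
  have hle : ∀ j ∈ Finset.univ, (Pi.single k 1 : ι → ℕ) j ≤ l j := by
    intro j _
    rcases eq_or_ne j k with rfl | hj <;> simp [*]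
  simp only [Pi.sub_apply, Finset.sum_tsub_distrib _ hle, Finset.sum_pi_single', Finset.mem_univ,
    if_true]
  exact Nat.sub_add_cancel
    (hk.trans (Finset.single_le_sum_of_canonicallyOrdered (f := l) (Finset.mem_univ k)))

lemma update_sub_one_eq_sub_single (l : ι → ℕ) (p : ι) :
    Function.update l p (l p - 1) = l - Pi.single p 1 := by
  ext j
  rcases eq_or_ne j p with rfl | hj <;> simp [*]

end DegreeBounds

section GeneralMatrices

variable {R ι κ : Type*}

lemma coeff_prod_sum_of_natDegree_le [CommSemiring R] (s : Finset ι) (f : ι → R[X]) (d : ι → ℕ)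
    (h : ∀ i ∈ s, (f i).natDegree ≤ d i) :
    (∏ i ∈ s, f i).coeff (∑ i ∈ s, d i) = ∏ i ∈ s, (f i).coeff (d i) := by
  classical
  induction s using Finset.induction_on with
  | empty => simp
  | insert a s ha ih =>
    rw [Finset.forall_mem_insert] at h
    have hdeg : (∏ i ∈ s, f i).natDegree ≤ ∑ i ∈ s, d i :=
      (natDegree_prod_le s f).trans (Finset.sum_le_sum h.2)
    rw [Finset.prod_insert ha, Finset.sum_insert ha, Finset.prod_insert ha,
      coeff_mul_add_eq_of_natDegree_le h.1 hdeg, ih h.2]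

lemma coeff_det_sum_of_natDegree_le [CommRing R] [Fintype ι] [DecidableEq ι]
    (M : Matrix ι ι R[X]) (d : ι → ℕ) (h : ∀ i j, (M i j).natDegree ≤ d j) :
    M.det.coeff (∑ j, d j) = (Matrix.of fun i j => (M i j).coeff (d j)).det := by
  simp only [Matrix.det_apply, finsetSum_coeff, Units.smul_def, coeff_smul, Matrix.of_apply]
  exact Finset.sum_congr rfl fun σ _ => congrArg _
    (coeff_prod_sum_of_natDegree_le Finset.univ (fun j => M (σ j) j) d fun j _ => h (σ j) j)

lemma coeff_map_C_mul_apply [CommSemiring R] [Fintype ι] (D : Matrix ι ι R) (M : Matrix ι κ R[X])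
    (i : ι) (j : κ) (d : ℕ) :
    ((D.map C * M) i j).coeff d = (D *ᵥ fun a => (M a j).coeff d) i := by
  simp [Matrix.mul_apply, Matrix.mulVec, dotProduct]

lemma natDegree_map_C_mul_apply_le [CommSemiring R] [Fintype ι] (D : Matrix ι ι R)
    {M : Matrix ι κ R[X]} {j : κ} {d : ℕ} (h : ∀ i, (M i j).natDegree ≤ d) (i : ι) :
    ((D.map C * M) i j).natDegree ≤ d := by
  rw [Matrix.mul_apply]
  exact natDegree_sum_le_of_forall_le _ _ fun a _ => (natDegree_C_mul_le _ _).trans (h a)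

lemma finite_setOf_natDegree_le [Semiring R] [Finite R] (d : ℕ) :
    {p : R[X] | p.natDegree ≤ d}.Finite := by
  have : Finite (R[X]_(d + 1)) := Finite.of_equiv _ (degreeLTEquiv R (d + 1)).symm.toEquiv
  refine (Set.toFinite (R[X]_(d + 1) : Set R[X])).subset fun p hp => mem_degreeLT.2 ?_
  exact (natDegree_le_iff_degree_le.1 hp).trans_lt (by exact_mod_cast d.lt_succ_self)

variable [CommRing R] [Fintype ι] [DecidableEq ι]

lemma one_add_vecMulVec_mul_one_add_neg_vecMulVec {u v : ι → R} (h : v ⬝ᵥ u = 0) :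
    (1 + vecMulVec u v) * (1 + vecMulVec (-u) v) = 1 := by
  have hsq : vecMulVec u v * vecMulVec u v = 0 := by
    rw [vecMulVec_mul_vecMulVec, h, zero_smul, vecMulVec_zero]
  rw [neg_vecMulVec, ← sub_eq_add_neg, add_mul, one_mul, mul_sub, mul_one, hsq]
  abel

/-- The column shear `1 + u eₖᵀ`. Right multiplication by it adds the combination of the columns
with coefficient vector `u` to column `k`. -/
def colShear (k : ι) (u : ι → R) (hu : u k = 0) : GL ι R where
  val := 1 + vecMulVec u (Pi.single k 1)
  inv := 1 + vecMulVec (-u) (Pi.single k 1)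
  val_inv := one_add_vecMulVec_mul_one_add_neg_vecMulVec (by simpa using hu)
  inv_val := by
    simpa using one_add_vecMulVec_mul_one_add_neg_vecMulVec (u := -u) (v := Pi.single k 1)
      (by simpa using hu)

lemma inv_colShear {k : ι} {u : ι → R} (hu : u k = 0) :
    (colShear k u hu)⁻¹ = colShear k (-u) (by simpa using hu) :=
  Units.ext rfl

lemma coe_mul_colShear (A : GL ι R) {k : ι} {u : ι → R} (hu : u k = 0) :
    (A * colShear k u hu : GL ι R).val = A.val + vecMulVec (A.val *ᵥ u) (Pi.single k 1) := by
  rw [Units.val_mul, colShear, mul_add, mul_one, mul_vecMulVec]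

lemma coe_mul_colShear_apply_self (A : GL ι R) {k : ι} {u : ι → R} (hu : u k = 0) (r : ι) :
    (A * colShear k u hu : GL ι R).val r k = A.val r k + (A.val *ᵥ u) r := by
  rw [coe_mul_colShear, Matrix.add_apply, vecMulVec_apply, Pi.single_eq_same, mul_one]

lemma coe_mul_colShear_apply_of_ne (A : GL ι R) {k j : ι} (hj : j ≠ k) {u : ι → R} (hu : u k = 0)
    (r : ι) : (A * colShear k u hu : GL ι R).val r j = A.val r j := by
  rw [coe_mul_colShear, Matrix.add_apply, vecMulVec_apply, Pi.single_eq_of_ne hj, mul_zero,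
    add_zero]

/-- Right multiplication by `g`, corrected on the left by a constant matrix so that it preserves
the matrices with constant term `1`. -/
noncomputable def normalizedMul (A g : GL ι R[X]) : GL ι R[X] :=
  GeneralLinearGroup.map C (GeneralLinearGroup.map constantCoeff g)⁻¹ * A * g

lemma normalizedMul_normalizedMul_inv (A g : GL ι R[X]) :
    normalizedMul (normalizedMul A g) g⁻¹ = A := by
  simp only [normalizedMul, map_inv, inv_inv]
  group

lemma map_constantCoeff_map_C (D : GL ι R) :
    GeneralLinearGroup.map constantCoeff (GeneralLinearGroup.map C D) = D := by
  ext i j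
  simp

lemma map_constantCoeff_normalizedMul {A : GL ι R[X]}
    (hA : GeneralLinearGroup.map constantCoeff A = 1) (g : GL ι R[X]) :
    GeneralLinearGroup.map constantCoeff (normalizedMul A g) = 1 := by
  rw [normalizedMul, map_mul, map_mul, map_constantCoeff_map_C, hA, mul_one, inv_mul_cancel]

end GeneralMatrices

section IndependentColumns

variable {F : Type*} [Field F] {n : ℕ} {l : Fin n → ℕ}

lemma mem_Pset_iff {A : GL (Fin n) F[X]} :
    A ∈ Pset F n l ↔
      (∀ i j, (A.val i j).natDegree ≤ l j) ∧ GeneralLinearGroup.map constantCoeff A = 1 := by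
  have hconst : A.val.map (fun p => p.coeff 0) = (GeneralLinearGroup.map constantCoeff A).val := by
    ext i j
    simp
  simp only [Pset, Set.mem_ofPred_eq, natDegree_le_iff_degree_le, hconst, Units.val_eq_one]

lemma finite_Pset [Finite F] (l : Fin n → ℕ) : (Pset F n l).Finite := by
  have hbox : {M : Matrix (Fin n) (Fin n) F[X] | ∀ i j, (M i j).natDegree ≤ l j}.Finite := by
    refine (Set.Finite.pi fun _ : Fin n => Set.Finite.pi fun j =>
      finite_setOf_natDegree_le (R := F) (l j)).subset fun M hM i _ j _ => hM i j
  exact (hbox.preimage Units.val_injective.injOn).subset fun A hA => (mem_Pset_iff.1 hA).1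

lemma Pset_zero : Pset F n 0 = {1} := by
  ext A
  rw [mem_Pset_iff, Set.mem_singleton_iff]
  refine ⟨fun ⟨hdeg, hconst⟩ => ?_, ?_⟩
  · have hA : A = GeneralLinearGroup.map C (GeneralLinearGroup.map constantCoeff A) := by
      ext i j : 2
      exact eq_C_of_natDegree_le_zero (hdeg i j)
    rw [hA, hconst, map_one]
  · rintro rfl
    refine ⟨fun i j => ?_, map_one _⟩
    rw [Units.val_one, Matrix.one_apply]
    split_ifs <;> simp

/-- The matrices of `P_{n;l}` whose vectors `v_j`, `j ∈ s`, are linearly independent. For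
`s = {i, …, n}` this is the complement of `R^i_{n;l}` in `P_{n;l}`. -/
def indepSet (F : Type*) [Field F] {n : ℕ} (l : Fin n → ℕ) (s : Finset (Fin n)) :
    Set (GL (Fin n) F[X]) :=
  {A ∈ Pset F n l | LinearIndepOn F (colVec F n l A) s}

/-- The part of `indepSet F l s` on which `v_k` is the combination of the `v_j`, `j ∈ s`, with
coefficients `c`. -/
def relationSet {F : Type*} [Field F] {n : ℕ} (l : Fin n → ℕ) (k : Fin n) {s : Finset (Fin n)}
    (c : s → F) : Set (GL (Fin n) F[X]) :=
  {A ∈ indepSet F l s | colVec F n l A k = ∑ j, c j • colVec F n l A j}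

variable {k p : Fin n} {s : Finset (Fin n)}

lemma indepSet_empty : indepSet F l ∅ = Pset F n l := by
  simp [indepSet, linearIndepOn_empty]

lemma indepSet_subset_Pset : indepSet F l s ⊆ Pset F n l :=
  Set.sep_subset _ _

lemma indepSet_mono {t : Finset (Fin n)} (hst : s ⊆ t) : indepSet F l t ⊆ indepSet F l s :=
  fun _ hA => ⟨hA.1, hA.2.mono (Finset.coe_subset.2 hst)⟩

lemma finite_indepSet [Finite F] : (indepSet F l s).Finite :=
  (finite_Pset l).subset indepSet_subset_Pset

lemma indepSet_eq_Pset_of_forall_eq_zero (hs : ∀ j ∈ s, l j = 0) :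
    indepSet F l s = Pset F n l := by
  refine Set.sep_eq_self_iff_mem_true.2 fun A hA => ?_
  have hcol : Set.EqOn (colVec F n l A) (fun j => Pi.single j 1) s := by
    intro j hj
    ext r
    have hconst : (A.val r j).coeff 0 = (1 : Matrix (Fin n) (Fin n) F) r j := congrFun₂ hA.2 r j
    simp only [colVec, hs j hj, hconst, Matrix.one_apply, Pi.single_apply]
  exact (linearIndepOn_congr hcol).2 ((Pi.linearIndependent_single_one (Fin n) F).linearIndepOn s)

lemma indepSet_univ (hl : l ≠ 0) : indepSet F l Finset.univ = ∅ := by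
  refine Set.eq_empty_of_forall_notMem fun A ⟨hA, hind⟩ => ?_
  have hsum : ∑ j, l j ≠ 0 := by simpa [funext_iff] using hl
  have hdet : A.val.det.natDegree = 0 :=
    natDegree_eq_zero_of_isUnit ((Matrix.isUnit_iff_isUnit_det _).1 A.isUnit)
  have hlead : (Matrix.of fun r j => (A.val r j).coeff (l j)).det = 0 := by
    rw [← coeff_det_sum_of_natDegree_le A.val l (mem_Pset_iff.1 hA).1]
    exact coeff_eq_zero_of_natDegree_lt (by omega)
  rw [Finset.coe_univ, linearIndepOn_univ_iff] at hind
  have hunit : IsUnit (Matrix.of fun r j => (A.val r j).coeff (l j)) :=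
    linearIndependent_cols_iff_isUnit.1 hind
  exact ((Matrix.isUnit_iff_isUnit_det _).1 hunit).ne_zero hlead

lemma colVec_sub_single_of_ne {j : Fin n} (hj : j ≠ k) (A : GL (Fin n) F[X]) :
    colVec F n (l - Pi.single k 1) A j = colVec F n l A j := by
  ext r
  simp only [colVec, Pi.sub_apply, Pi.single_eq_of_ne hj, tsub_zero]

lemma mem_Pset_sub_single_iff (hk : 1 ≤ l k) {A : GL (Fin n) F[X]} :
    A ∈ Pset F n (l - Pi.single k 1) ↔ A ∈ Pset F n l ∧ colVec F n l A k = 0 := by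
  have hlower : ∀ r j, (A.val r j).natDegree ≤ (l - Pi.single k 1 : Fin n → ℕ) j ↔
      (A.val r j).natDegree ≤ l j ∧ (j = k → (A.val r j).coeff (l j) = 0) := by
    intro r j
    by_cases hj : j = k
    · subst hj
      simp only [Pi.sub_apply, Pi.single_eq_same, true_imp_iff]
      exact ⟨fun h => ⟨by omega, coeff_eq_zero_of_natDegree_lt (by omega)⟩,
        fun h => natDegree_le_pred h.1 h.2⟩
    · simp [hj]
  simp only [mem_Pset_iff, hlower, forall_and, colVec, funext_iff, forall_eq, Pi.zero_apply]
  exact and_right_comm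

lemma relationSet_zero (hk : 1 ≤ l k) (hks : k ∉ s) :
    relationSet l k (0 : s → F) = indepSet F (l - Pi.single k 1) s := by
  ext A
  have hcol : Set.EqOn (colVec F n (l - Pi.single k 1) A) (colVec F n l A) s :=
    fun j hj => colVec_sub_single_of_ne (ne_of_mem_of_not_mem hj hks) A
  simp only [relationSet, indepSet, Set.mem_ofPred_eq, mem_Pset_sub_single_iff hk,
    linearIndepOn_congr hcol, Pi.zero_apply, zero_smul, Finset.sum_const_zero]
  exact and_right_comm

lemma pairwise_disjoint_relationSet :
    Pairwise (Function.onFun Disjoint (relationSet (F := F) l k (s := s))) := by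
  intro c d hcd
  refine Set.disjoint_left.2 fun A ⟨⟨_, hind⟩, hc⟩ ⟨_, hd⟩ => hcd ?_
  ext j
  have hcomb : ∑ j : s, (c j - d j) • colVec F n l A j = 0 := by
    simp only [sub_smul, Finset.sum_sub_distrib, ← hc, ← hd, sub_self]
  exact sub_eq_zero.1 (Fintype.linearIndependent_iff.1 hind (c - d) hcomb j)

lemma indepSet_sdiff_indepSet_insert (hks : k ∉ s) :
    indepSet F l s \ indepSet F l (insert k s) = ⋃ c : s → F, relationSet l k c := by
  ext A
  simp only [relationSet, Set.mem_iUnion, Set.mem_ofPred_eq, Set.mem_sdiff, exists_and_left]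
  refine and_congr_right fun hA => ?_
  rw [indepSet, Set.mem_ofPred_eq, Finset.coe_insert, linearIndepOn_insert (by simpa using hks)]
  simp only [hA.1, hA.2, true_and, not_not, Submodule.mem_span_image_finset_iff_exists_fun, eq_comm]

/-- The coefficient vector of the shear adding `∑ c_j x^{l_k - l_j} A_j` to the column `A_k`. -/
noncomputable def shearVec (l : Fin n → ℕ) (k : Fin n) (c : s → F) : Fin n → F[X] :=
  ∑ j : s, Pi.single (j : Fin n) (C (c j) * X ^ (l k - l j))

lemma shearVec_neg (c : s → F) : shearVec l k (-c) = -shearVec l k c := by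
  simp [shearVec, Pi.single_neg]

lemma shearVec_apply_eq_zero (hks : k ∉ s) (c : s → F) : shearVec l k c k = 0 := by
  rw [shearVec, Finset.sum_apply]
  exact Finset.sum_eq_zero fun j _ => Pi.single_eq_of_ne (ne_of_mem_of_not_mem j.2 hks).symm _

lemma mulVec_shearVec_apply (M : Matrix (Fin n) (Fin n) F[X]) (c : s → F) (r : Fin n) :
    (M *ᵥ shearVec l k c) r = ∑ j : s, M r j * (C (c j) * X ^ (l k - l j)) := by
  simp only [shearVec, mulVec_sum, mulVec_single, Finset.sum_apply, Pi.smul_apply, col_apply,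
    MulOpposite.smul_eq_mul_unop, MulOpposite.unop_op]

lemma natDegree_mulVec_shearVec_le {M : Matrix (Fin n) (Fin n) F[X]}
    (hM : ∀ r j, (M r j).natDegree ≤ l j) (hs : ∀ j ∈ s, l j ≤ l k) (c : s → F) (r : Fin n) :
    ((M *ᵥ shearVec l k c) r).natDegree ≤ l k := by
  rw [mulVec_shearVec_apply]
  refine natDegree_sum_le_of_forall_le _ _ fun j _ => natDegree_mul_le.trans ?_
  have := natDegree_C_mul_X_pow_le (c j) (l k - l j)
  have := hM r j
  have := hs j j.2
  omega

lemma coeff_mulVec_shearVec (M : Matrix (Fin n) (Fin n) F[X])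
    (hs : ∀ j ∈ s, l j ≤ l k) (c : s → F) (r : Fin n) :
    ((M *ᵥ shearVec l k c) r).coeff (l k) = ∑ j : s, c j * (M r j).coeff (l j) := by
  rw [mulVec_shearVec_apply, finsetSum_coeff]
  refine Finset.sum_congr rfl fun j _ => ?_
  rw [mul_left_comm, coeff_C_mul, coeff_mul_X_pow', if_pos (Nat.sub_le _ _),
    Nat.sub_sub_self (hs j j.2)]

/-- The shear whose right multiplication adds `∑ c_j v_j` to the vector `v_k` of coefficients of
`x^{l_k}`, leaving the other columns unchanged. -/
noncomputable def leadingShear (l : Fin n → ℕ) (hks : k ∉ s) (c : s → F) : GL (Fin n) F[X] :=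
  colShear k (shearVec l k c) (shearVec_apply_eq_zero hks c)

lemma inv_leadingShear (hks : k ∉ s) (c : s → F) :
    (leadingShear l hks c)⁻¹ = leadingShear l hks (-c) := by
  simp only [leadingShear, inv_colShear, shearVec_neg]

lemma colVec_mul_leadingShear_self (hks : k ∉ s) (hs : ∀ j ∈ s, l j ≤ l k) (c : s → F)
    (A : GL (Fin n) F[X]) :
    colVec F n l (A * leadingShear l hks c) k =
      colVec F n l A k + ∑ j, c j • colVec F n l A j := by
  ext r
  simp only [colVec, leadingShear, coe_mul_colShear_apply_self, coeff_add,
    coeff_mulVec_shearVec _ hs, Pi.add_apply, Finset.sum_apply, Pi.smul_apply, smul_eq_mul]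

lemma colVec_mul_leadingShear_of_ne {j : Fin n} (hj : j ≠ k) (hks : k ∉ s) (c : s → F)
    (A : GL (Fin n) F[X]) : colVec F n l (A * leadingShear l hks c) j = colVec F n l A j := by
  ext r
  rw [colVec, leadingShear, coe_mul_colShear_apply_of_ne A hj, colVec]

lemma natDegree_mul_leadingShear_le (hks : k ∉ s) (hs : ∀ j ∈ s, l j ≤ l k) (c : s → F)
    {A : GL (Fin n) F[X]} (hA : ∀ r j, (A.val r j).natDegree ≤ l j) (r j : Fin n) :
    ((A * leadingShear l hks c : GL (Fin n) F[X]).val r j).natDegree ≤ l j := by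
  by_cases hj : j = k
  · subst hj
    rw [leadingShear, coe_mul_colShear_apply_self]
    exact natDegree_add_le_of_degree_le (hA r j) (natDegree_mulVec_shearVec_le hA hs c r)
  · rw [leadingShear, coe_mul_colShear_apply_of_ne A hj]
    exact hA r j

lemma colVec_normalizedMul (A g : GL (Fin n) F[X]) (j : Fin n) :
    colVec F n l (normalizedMul A g) j =
      ((GeneralLinearGroup.map constantCoeff g)⁻¹).val *ᵥ colVec F n l (A * g) j := by
  ext r
  rw [normalizedMul, mul_assoc]
  exact coeff_map_C_mul_apply _ _ r j (l j)

lemma normalizedMul_mem_Pset {A g : GL (Fin n) F[X]} (hA : A ∈ Pset F n l)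
    (hg : ∀ r j, ((A * g : GL (Fin n) F[X]).val r j).natDegree ≤ l j) :
    normalizedMul A g ∈ Pset F n l := by
  refine mem_Pset_iff.2 ⟨fun r j => ?_,
    map_constantCoeff_normalizedMul (mem_Pset_iff.1 hA).2 g⟩
  rw [normalizedMul, mul_assoc]
  exact natDegree_map_C_mul_apply_le _ (fun i => hg i j) r

lemma mapsTo_normalizedMul_leadingShear (hks : k ∉ s) (hs : ∀ j ∈ s, l j ≤ l k) (c d : s → F) :
    Set.MapsTo (normalizedMul · (leadingShear l hks d)) (relationSet l k c)
      (relationSet l k (c + d)) := by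
  rintro A ⟨⟨hA, hind⟩, hc⟩
  dsimp only
  set g := leadingShear l hks d
  obtain ⟨D, hD⟩ : ∃ D : GL (Fin n) F, ∀ j,
      colVec F n l (normalizedMul A g) j = D.val *ᵥ colVec F n l (A * g) j :=
    ⟨_, colVec_normalizedMul A g⟩
  have hcol : ∀ j ∈ s, colVec F n l (normalizedMul A g) j = D.val *ᵥ colVec F n l A j := by
    intro j hj
    rw [hD, colVec_mul_leadingShear_of_ne (ne_of_mem_of_not_mem hj hks)]
  refine ⟨⟨normalizedMul_mem_Pset hA
    (natDegree_mul_leadingShear_le hks hs d (mem_Pset_iff.1 hA).1), ?_⟩, ?_⟩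
  · exact (linearIndepOn_congr hcol).2 (hind.map_injOn D.val.mulVecLin
      (mulVec_injective_of_isUnit D.isUnit).injOn)
  · calc colVec F n l (normalizedMul A g) k
        = D.val *ᵥ (∑ j, (c + d) j • colVec F n l A j) := by
          rw [hD, colVec_mul_leadingShear_self hks hs, hc]
          simp only [Pi.add_apply, add_smul, Finset.sum_add_distrib]
      _ = ∑ j, (c + d) j • (D.val *ᵥ colVec F n l A j) := by
          simp only [mulVec_sum, mulVec_smul]
      _ = ∑ j, (c + d) j • colVec F n l (normalizedMul A g) j :=
          Finset.sum_congr rfl fun j _ => by rw [hcol j j.2]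

lemma bijOn_normalizedMul_leadingShear (hks : k ∉ s) (hs : ∀ j ∈ s, l j ≤ l k) (c d : s → F) :
    Set.BijOn (normalizedMul · (leadingShear l hks d)) (relationSet l k c)
      (relationSet l k (c + d)) := by
  have hmaps := mapsTo_normalizedMul_leadingShear hks hs (c + d) (-d)
  rw [add_neg_cancel_right] at hmaps
  refine Set.InvOn.bijOn (f' := (normalizedMul · (leadingShear l hks (-d)))) ⟨fun A _ => ?_,
    fun A _ => ?_⟩ (mapsTo_normalizedMul_leadingShear hks hs c d) hmaps
  · simp only [← inv_leadingShear, normalizedMul_normalizedMul_inv]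
  · simpa only [← inv_leadingShear, inv_inv] using
      normalizedMul_normalizedMul_inv A (leadingShear l hks d)⁻¹

lemma ncard_relationSet (hk : 1 ≤ l k) (hks : k ∉ s) (hs : ∀ j ∈ s, l j ≤ l k) (c : s → F) :
    (relationSet l k c).ncard = (indepSet F (l - Pi.single k 1) s).ncard := by
  rw [← relationSet_zero hk hks, ← zero_add c]
  exact (bijOn_normalizedMul_leadingShear hks hs 0 c).ncard_eq.symm

lemma ncard_indepSet [Finite F] (hk : 1 ≤ l k) (hks : k ∉ s) (hs : ∀ j ∈ s, l j ≤ l k) :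
    (indepSet F l s).ncard = (indepSet F l (insert k s)).ncard +
      Nat.card F ^ s.card * (indepSet F (l - Pi.single k 1) s).ncard := by
  have hfin : ∀ c : s → F, (relationSet l k c).Finite :=
    fun c => finite_indepSet.subset (Set.sep_subset _ _)
  rw [← Set.ncard_sdiff_add_ncard_of_subset (indepSet_mono (Finset.subset_insert k s))
    finite_indepSet, add_comm, indepSet_sdiff_indepSet_insert hks,
    Set.ncard_iUnion_of_finite hfin pairwise_disjoint_relationSet]
  have := Fintype.ofFinite F
  simp [finsum_eq_sum_of_fintype, ncard_relationSet hk hks hs]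

/-- The property that lowering the degree bound `l_p` by one divides the number of matrices of
`P_{n;l}` with independent `v_j`, `j ∈ s`, by `q ^ (n - 1)`. -/
def ScalesAt (F : Type*) [Field F] {n : ℕ} (l : Fin n → ℕ) (p : Fin n) (s : Finset (Fin n)) :
    Prop :=
  (indepSet F l s).ncard = Nat.card F ^ (n - 1) * (indepSet F (l - Pi.single p 1) s).ncard

lemma scalesAt_insert_iff [Finite F] (hkp : k ≠ p) (hks : k ∉ s) (hs : ∀ j ∈ s, l j ≤ l k)
    (hlower : 1 ≤ l k → ScalesAt F (l - Pi.single k 1) p s) :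
    ScalesAt F l p (insert k s) ↔ ScalesAt F l p s := by
  rcases Nat.eq_zero_or_pos (l k) with hk | hk
  · have hzero : ∀ j ∈ insert k s, l j = 0 := by simpa [hk] using hs
    have hzero' : ∀ j ∈ insert k s, (l - Pi.single p 1 : Fin n → ℕ) j = 0 :=
      fun j hj => by simp [hzero j hj]
    have hsub := Finset.subset_insert k s
    rw [ScalesAt, ScalesAt, indepSet_eq_Pset_of_forall_eq_zero hzero,
      indepSet_eq_Pset_of_forall_eq_zero hzero',
      indepSet_eq_Pset_of_forall_eq_zero fun j hj => hzero j (hsub hj),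
      indepSet_eq_Pset_of_forall_eq_zero fun j hj => hzero' j (hsub hj)]
  · have hk' : (l - Pi.single p 1 : Fin n → ℕ) k = l k := by simp [hkp]
    have hs' : ∀ j ∈ s, (l - Pi.single p 1 : Fin n → ℕ) j ≤ (l - Pi.single p 1 : Fin n → ℕ) k :=
      fun j hj => hk' ▸ (Nat.sub_le _ _).trans (hs j hj)
    have hrec := ncard_indepSet (F := F) hk hks hs
    have hrec' := ncard_indepSet (F := F) (hk.trans_eq hk'.symm) hks hs'
    have hscale := hlower hk
    rw [ScalesAt, tsub_right_comm] at hscale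
    rw [ScalesAt, ScalesAt, hrec, hrec', hscale, mul_add, mul_left_comm, add_left_inj]

/-- The elements of `s` are inserted in order of increasing degree bound, so that
`scalesAt_insert_iff` applies to each of them. -/
lemma scalesAt_iff_empty [Finite F] (hps : p ∉ s)
    (hlower : ∀ k ≠ p, 1 ≤ l k → ∀ t, p ∉ t → ScalesAt F (l - Pi.single k 1) p t) :
    ScalesAt F l p s ↔ ScalesAt F l p ∅ := by
  induction s using Finset.induction_on_max_value l with
  | empty => rfl
  | insert k s hks hmax ih =>
    rw [Finset.mem_insert, not_or] at hps
    rw [scalesAt_insert_iff (Ne.symm hps.1) hks hmax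
      fun hk => hlower k (Ne.symm hps.1) hk s hps.2, ih hps.2]

lemma scalesAt_of_forall_scalesAt [Finite F] {Q : (Fin n → ℕ) → Prop} {t : Finset (Fin n)}
    (hQ : ∀ l, ∀ k ≠ p, Q l → Q (l - Pi.single k 1)) (hpt : p ∉ t)
    (ht : ∀ l, Q l → ScalesAt F l p t) (hl : Q l) (hps : p ∉ s) : ScalesAt F l p s := by
  induction l using WellFoundedLT.induction generalizing s with
  | ind l ih =>
    have hlower : ∀ k ≠ p, 1 ≤ l k → ∀ u, p ∉ u → ScalesAt F (l - Pi.single k 1) p u :=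
      fun k hkp hk u hpu => ih _ (sub_single_lt hk) (hQ l k hkp hl) hpu
    rw [scalesAt_iff_empty hps hlower, ← scalesAt_iff_empty hpt hlower]
    exact ht l hl

lemma scalesAt_compl_singleton [Finite F] (hp : 1 ≤ l p) (hmax : ∀ j, l j ≤ l p) :
    ScalesAt F l p {p}ᶜ := by
  have hl : l ≠ 0 := fun h => by simp [h] at hp
  have hinsert : insert p ({p}ᶜ : Finset (Fin n)) = Finset.univ := by
    simp
  rw [ScalesAt, ncard_indepSet hp (by simp) fun j _ => hmax j, hinsert, indepSet_univ hl,
    Set.ncard_empty, zero_add, Finset.card_compl, Finset.card_singleton, Fintype.card_fin]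

lemma scalesAt_of_forall_le [Finite F] (hp : 1 ≤ l p) (hmax : ∀ j, l j ≤ l p) (hps : p ∉ s) :
    ScalesAt F l p s := by
  refine scalesAt_of_forall_scalesAt (Q := fun l => 1 ≤ l p ∧ ∀ j, l j ≤ l p) (t := {p}ᶜ) ?_
    (by simp) (fun l hl => scalesAt_compl_singleton hl.1 hl.2) ⟨hp, hmax⟩ hps
  rintro l k hkp ⟨hp, hmax⟩
  have hlp : (l - Pi.single k 1 : Fin n → ℕ) p = l p := by simp [hkp.symm]
  exact ⟨hlp.symm ▸ hp, fun j => hlp.symm ▸ (Nat.sub_le _ _).trans (hmax j)⟩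

lemma ncard_Pset [Finite F] (l : Fin n → ℕ) :
    (Pset F n l).ncard = Nat.card F ^ ((n - 1) * ∑ j, l j) := by
  induction l using WellFoundedLT.induction with
  | ind l ih =>
    rcases eq_or_ne l 0 with rfl | hl
    · simp [Pset_zero]
    · obtain ⟨i, hi⟩ := Function.ne_iff.1 hl
      have : Nonempty (Fin n) := ⟨i⟩
      obtain ⟨p, hmax⟩ := Finite.exists_max l
      have hp : 1 ≤ l p := (Nat.one_le_iff_ne_zero.2 hi).trans (hmax i)
      have hscale := scalesAt_of_forall_le (F := F) hp hmax (Finset.notMem_empty p)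
      rw [ScalesAt, indepSet_empty, indepSet_empty, ih _ (sub_single_lt hp)] at hscale
      rw [hscale, ← pow_add, ← sum_sub_single_add_one hp, mul_add_one, add_comm]

lemma scalesAt_empty [Finite F] (hp : 1 ≤ l p) : ScalesAt F l p ∅ := by
  rw [ScalesAt, indepSet_empty, indepSet_empty, ncard_Pset, ncard_Pset, ← pow_add,
    ← sum_sub_single_add_one hp, mul_add_one, add_comm]

lemma scalesAt_of_notMem [Finite F] (hp : 1 ≤ l p) (hps : p ∉ s) : ScalesAt F l p s := by
  refine scalesAt_of_forall_scalesAt (Q := fun l => 1 ≤ l p) ?_ (Finset.notMem_empty p)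
    (fun l => scalesAt_empty) hp hps
  intro l k hkp hp
  simpa [hkp.symm] using hp

lemma Rset_eq_Pset_sdiff_indepSet (i : ℕ) :
    Rset F n l i = Pset F n l \ indepSet F l {j | i ≤ (j : ℕ) + 1} := by
  ext A
  simp only [Rset, indepSet, Set.mem_ofPred_eq, Set.mem_sdiff, not_and, Finset.coe_filter,
    Finset.mem_univ, true_and]
  exact and_congr_right fun hA => (imp_iff_right hA).symm

end IndependentColumns

theorem stmt_10_general (F : Type*) [Field F] [Finite F] (n i : ℕ) (l : Fin n → ℕ) (p : Fin n)
    (hpi : (p : ℕ) + 1 < i) (hp : 1 ≤ l p) :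
    (Rset F n l i).ncard =
      Nat.card F ^ (n - 1) * (Rset F n (Function.update l p (l p - 1)) i).ncard := by
  have hps : p ∉ ({j | i ≤ (j : ℕ) + 1} : Finset (Fin n)) := by simpa using hpi
  have hall : ScalesAt F l p ∅ := scalesAt_empty hp
  have hindep : ScalesAt F l p {j | i ≤ (j : ℕ) + 1} := scalesAt_of_notMem hp hps
  rw [ScalesAt, indepSet_empty, indepSet_empty] at hall
  rw [update_sub_one_eq_sub_single, Rset_eq_Pset_sdiff_indepSet, Rset_eq_Pset_sdiff_indepSet,
    Set.ncard_sdiff indepSet_subset_Pset finite_indepSet,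
    Set.ncard_sdiff indepSet_subset_Pset finite_indepSet, hall, hindep, Nat.mul_sub]

/-- For `2 ≤ i ≤ n`, `l_i ≥ ⋯ ≥ lₙ ≥ 1` and `l₁ ≥ 1`,
`#R^i_{n;l₁,l₂,…,lₙ} = q^{n-1} · #R^i_{n;l₁-1,l₂,…,lₙ}`. -/
theorem stmt_10 (F : Type*) [Field F] [Fintype F] (q : ℕ) (hq : Fintype.card F = q)
    (n i : ℕ) (hn : 2 ≤ n) (hi2 : 2 ≤ i) (hin : i ≤ n)
    (l : Fin n → ℕ)
    (hdesc : ∀ j j' : Fin n, i ≤ (j : ℕ) + 1 → j ≤ j' → l j' ≤ l j)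
    (hpos : ∀ j : Fin n, i ≤ (j : ℕ) + 1 → 1 ≤ l j)
    (hl1 : 1 ≤ l ⟨0, by omega⟩) :
    (Rset F n l i).ncard
      = q ^ (n - 1) *
        (Rset F n (Function.update l ⟨0, by omega⟩ (l ⟨0, by omega⟩ - 1)) i).ncard := by
  subst hq
  rw [← Nat.card_eq_fintype_card]
  exact stmt_10_general F n i l _ hi2 hl1
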